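/- Let n ≥ 1 and let a : ℝⁿ × ℝⁿ → ℂ be a continuous bounded function that is ℤⁿ-periodic in its first variable. Define, for Schwartz f on ℝⁿ, T f(x) = ∫_{ℝⁿ} e^{2πi x·ξ} a(x,ξ) (𝓕_{ℝⁿ} f)(ξ) dξ, and define, for each trigonometric polynomial P(x) = Σ_{ξ∈F} c_ξ e^{2πi x·ξ} (F ⊂ ℤⁿ finite), A P(x) = Σ_{ξ∈F} e^{2πi x·ξ} a(x,ξ) c_ξ. If there exists C ≥ 0 such that ‖T f‖_{L²(ℝⁿ)} ≤ C ‖f‖_{L²(ℝⁿ)} for every Schwartz function f, then there exists C' ≥ 0 such that ‖A P‖_{L²([0,1]ⁿ)} ≤ C' ‖P‖_{L²([0,1]ⁿ)} for every trigonometric polynomial P. -/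

import Mathlib

/-!
The trigonometric polynomial `P` is tested through `f_N (y) = φ(y / N) P(y)`, where `φ` is a smooth
cutoff equal to `1` on `[-1, 1]ⁿ` and supported in `[-2, 2]ⁿ`. The Fourier transform of `f_N` is
concentrated at scale `1 / N` around the frequencies `k` of `P`, so after rescaling

  `T f_N (x) = ∑ c_k ∫ e^{2πi x·(k + η/N)} a(x, k + η/N) φ̂(η) dη`.

Since `a(·, ξ)` is periodic, `a(x, k + h)` tends to `a(x, k)` as `h → 0` uniformly in `x`
(`symbol_equicontinuous`). Hence `a` may be frozen at `ξ = k` with an error that tends to `0`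
uniformly in `x` (`freeze_error`), and Fourier inversion gives `T f_N (x) ≈ φ(x / N) A P (x)`,
which is `A P (x)` on `[-N, N)ⁿ`. Integrating over that cube and using the bound for `T`,

  `∫_{[-N, N)ⁿ} |A P|² ≤ 2 C² ∫_{[-2N, 2N)ⁿ} |P|² + 2 δ² (2N)ⁿ`.

Both integrands are periodic, so the integrals are `(2N)ⁿ` and `(4N)ⁿ` times those over the unit
cube (`lintegral_cube`). Dividing by `(2N)ⁿ` and letting `δ → 0` gives `C' = √(2 · 2ⁿ) C`. The
crude inequality `(u + v)² ≤ 2 u² + 2 v²`, instead of Minkowski's, makes it unnecessary to know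
that `T f_N` is measurable.
-/

open MeasureTheory Real Complex

/-- The Euclidean pseudo-differential operator
`T f (x) = ∫_{ℝⁿ} e^{2πi x·ξ} a(x,ξ) (𝓕_{ℝⁿ} f)(ξ) dξ`, where
`(𝓕_{ℝⁿ} f)(ξ) = ∫_{ℝⁿ} e^{-2πi y·ξ} f(y) dy`. -/
noncomputable def pdo (n : ℕ) (a : (Fin n → ℝ) × (Fin n → ℝ) → ℂ)
    (f : (Fin n → ℝ) → ℂ) : (Fin n → ℝ) → ℂ :=
  fun x => ∫ ξ : Fin n → ℝ,
    Complex.exp (2 * π * Complex.I * (∑ i, x i * ξ i)) * a (x, ξ) *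
      ∫ y : Fin n → ℝ, Complex.exp (-(2 * π * Complex.I * (∑ i, y i * ξ i))) * f y

/-! ### Characters -/

/-- The character `e^{2πi x·ξ}` on `ℝⁿ`, with the dot product written in coordinates. -/
noncomputable def ch {n : ℕ} (x ξ : Fin n → ℝ) : ℂ :=
  Complex.exp (2 * π * Complex.I * (∑ i, x i * ξ i))

lemma norm_ch {n : ℕ} (x ξ : Fin n → ℝ) : ‖ch x ξ‖ = 1 := by
  have h : (2 * π * Complex.I * (∑ i, x i * ξ i) : ℂ)
      = ((2 * π * ∑ i, x i * ξ i : ℝ) : ℂ) * Complex.I := by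
    push_cast; ring
  rw [ch, h, Complex.norm_exp_ofReal_mul_I]

lemma ch_neg {n : ℕ} (x ξ : Fin n → ℝ) :
    ch x (-ξ) = Complex.exp (-(2 * π * Complex.I * (∑ i, x i * ξ i))) := by
  simp [ch, Finset.sum_neg_distrib]

lemma ch_add_right {n : ℕ} (x ξ η : Fin n → ℝ) : ch x (ξ + η) = ch x ξ * ch x η := by
  simp only [ch, ← Complex.exp_add, Pi.add_apply, mul_add, Finset.sum_add_distrib]
  push_cast; ring_nf

lemma ch_comm {n : ℕ} (x ξ : Fin n → ℝ) : ch x ξ = ch ξ x := by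
  simp [ch, mul_comm]

lemma ch_smul {n : ℕ} (t : ℝ) (x ξ : Fin n → ℝ) : ch (t • x) ξ = ch x (t • ξ) := by
  simp [ch, mul_comm, mul_left_comm]

lemma contDiff_ch {n : ℕ} (ξ : Fin n → ℝ) : ContDiff ℝ (⊤ : ℕ∞) (fun x => ch x ξ) := by
  unfold ch
  apply ContDiff.cexp
  apply ContDiff.mul contDiff_const
  have : ContDiff ℝ (⊤ : ℕ∞) (fun x : Fin n → ℝ => ∑ i, x i * ξ i) :=
    ContDiff.sum fun i _ => (contDiff_apply ℝ ℝ i).mul contDiff_const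
  exact Complex.ofRealCLM.contDiff.comp this

lemma continuous_ch_right {n : ℕ} (x : Fin n → ℝ) : Continuous (fun ξ => ch x ξ) := by
  unfold ch; fun_prop

lemma ch_int {n : ℕ} (j k : Fin n → ℤ) :
    ch (fun i => (j i : ℝ)) (fun i => (k i : ℝ)) = 1 := by
  have h : (2 * π * Complex.I * ((∑ i, (j i : ℝ) * (k i : ℝ) : ℝ) : ℂ) : ℂ)
      = ((∑ i, j i * k i : ℤ) : ℂ) * (2 * π * Complex.I) := by
    push_cast; ring
  rw [ch, h, Complex.exp_int_mul_two_pi_mul_I]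

lemma ch_periodic {n : ℕ} (x : Fin n → ℝ) (j k : Fin n → ℤ) :
    ch (x + fun i => (j i : ℝ)) (fun i => (k i : ℝ)) = ch x (fun i => (k i : ℝ)) := by
  rw [ch_comm, ch_add_right, ch_comm _ (fun i => (j i : ℝ)), ch_int, mul_one, ch_comm]

/-! ### The cutoff and its Fourier transform -/

/-- A smooth cutoff `φ` equal to `1` on the unit ball of the sup norm and supported in the ball of
radius `2`, together with its Fourier transform `g`, for which the inversion formula holds and
whose first moment is finite. -/
lemma exists_cutoff (n : ℕ) : ∃ φ g : (Fin n → ℝ) → ℂ,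
    ContDiff ℝ (⊤ : ℕ∞) φ ∧ HasCompactSupport φ ∧ (∀ x, ‖x‖ ≤ 1 → φ x = 1) ∧
    (∀ x, 2 ≤ ‖x‖ → φ x = 0) ∧ (∀ x, ‖φ x‖ ≤ 1) ∧
    Integrable g ∧ Integrable (fun η => ‖η‖ * ‖g η‖) ∧
    (∀ ξ, g ξ = ∫ y, ch y (-ξ) * φ y) ∧ (∀ y, φ y = ∫ η, ch y η * g η) := by
  let b : ContDiffBump (0 : Fin n → ℝ) := ⟨1, 2, one_pos, one_lt_two⟩
  let φ : (Fin n → ℝ) → ℂ := fun x => ((b x : ℝ) : ℂ)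
  have hφs : ContDiff ℝ (⊤ : ℕ∞) φ := Complex.ofRealCLM.contDiff.comp b.contDiff
  have hφc : HasCompactSupport φ := b.hasCompactSupport.comp_left (g := ((↑) : ℝ → ℂ)) (by simp)
  let L : EuclideanSpace ℝ (Fin n) ≃L[ℝ] (Fin n → ℝ) := EuclideanSpace.equiv (Fin n) ℝ
  let ψ : SchwartzMap (EuclideanSpace ℝ (Fin n)) ℂ :=
    SchwartzMap.compCLMOfContinuousLinearEquiv ℂ L (hφc.toSchwartzMap hφs)
  let G : SchwartzMap (Fin n → ℝ) ℂ :=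
    SchwartzMap.compCLMOfContinuousLinearEquiv ℂ L.symm (FourierTransform.fourier ψ)
  have hψ : ∀ x, ψ x = φ (x.ofLp) := fun x => rfl
  have hG : ∀ ξ, G ξ = FourierTransform.fourier (ψ : EuclideanSpace ℝ (Fin n) → ℂ)
      (WithLp.toLp 2 ξ) := fun ξ => rfl
  have hmp := EuclideanSpace.volume_preserving_symm_measurableEquiv_toLp (Fin n)
  refine ⟨φ, G, hφs, hφc, ?_, ?_, ?_, G.integrable, ?_, ?_, ?_⟩
  · intro x hx
    have : b x = 1 := b.one_of_mem_closedBall (by simpa [b] using hx)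
    simp [φ, this]
  · intro x hx
    have : b x = 0 := b.zero_of_le_dist (by simpa [b] using hx)
    simp [φ, this]
  · intro x
    simp only [φ, Complex.norm_real, Real.norm_eq_abs, abs_of_nonneg b.nonneg]
    exact b.le_one
  · simpa using G.integrable_pow_mul volume 1
  · intro ξ
    rw [hG, Real.fourier_eq', ← hmp.integral_comp']
    congr 1; ext v
    rw [hψ, smul_eq_mul, ch]
    congr 2
    simp [PiLp.inner_apply, Finset.sum_neg_distrib, mul_comm, mul_assoc]
  · intro y
    have h1 : φ y = ψ (WithLp.toLp 2 y) := rfl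
    have h2 : ψ (WithLp.toLp 2 y)
        = FourierTransformInv.fourierInv (FourierTransform.fourier ψ) (WithLp.toLp 2 y) := by
      rw [FourierTransform.fourierInv_fourier_eq]
    rw [h1, h2, SchwartzMap.fourierInv_coe, Real.fourierInv_eq', ← hmp.integral_comp']
    congr 1; ext v
    rw [hG, smul_eq_mul, ch]
    congr 2
    simp [PiLp.inner_apply, mul_comm, mul_assoc]

/-! ### Tiling by unit cubes -/

/-- The half-open cube `[-N, N)ⁿ`. -/
def cube (n N : ℕ) : Set (Fin n → ℝ) := Set.univ.pi fun _ => Set.Ico (-(N : ℝ)) N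

lemma measurableSet_cube (n N : ℕ) : MeasurableSet (cube n N) :=
  MeasurableSet.univ_pi fun _ => measurableSet_Ico

/-- Tiling: the integral of a periodic function over `[-N, N)ⁿ` is `(2N)ⁿ` times its integral over
the unit cube. -/
lemma lintegral_cube {n : ℕ} (N : ℕ) (h : (Fin n → ℝ) → ENNReal)
    (hp : ∀ (x : Fin n → ℝ) (j : Fin n → ℤ), h (x + fun i => (j i : ℝ)) = h x) :
    ∫⁻ x in cube n N, h x = (2 * N : ℕ) ^ n * ∫⁻ x in Set.Icc (0 : Fin n → ℝ) 1, h x := by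
  classical
  let S : Finset (Fin n → ℤ) := Fintype.piFinset fun _ => Finset.Ico (-(N : ℤ)) N
  let Q : (Fin n → ℤ) → Set (Fin n → ℝ) := fun j =>
    Set.univ.pi fun i => Set.Ico (j i : ℝ) (j i + 1)
  have hmem : ∀ (j : Fin n → ℤ) x, x ∈ Q j ↔ ∀ i, ⌊x i⌋ = j i := by
    intro j x
    simp [Q, Int.floor_eq_iff]
  have hQm : ∀ j, MeasurableSet (Q j) := fun j => MeasurableSet.univ_pi fun _ => measurableSet_Ico
  have hcube : cube n N = ⋃ j ∈ S, Q j := by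
    ext x
    simp only [Set.mem_iUnion, hmem, S, Fintype.mem_piFinset, Finset.mem_Ico, cube,
      Set.mem_univ_pi, Set.mem_Ico, exists_prop]
    constructor
    · intro hx
      refine ⟨fun i => ⌊x i⌋, fun i => ⟨?_, ?_⟩, fun i => rfl⟩
      · rw [Int.le_floor]; push_cast; exact (hx i).1
      · rw [Int.floor_lt]; push_cast; exact (hx i).2
    · rintro ⟨j, hj, hx⟩ i
      obtain ⟨h1, h2⟩ := hj i
      rw [← hx i, Int.le_floor] at h1
      rw [← hx i, Int.floor_lt] at h2
      push_cast at h1 h2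
      exact ⟨h1, h2⟩
  have hQ : ∀ j, ∫⁻ x in Q j, h x = ∫⁻ x in Set.Icc (0 : Fin n → ℝ) 1, h x := by
    intro j
    have h0 : ∫⁻ x in Set.Icc (0 : Fin n → ℝ) 1, h x = ∫⁻ x in Q 0, h x := by
      apply setLIntegral_congr
      have := Measure.univ_pi_Ico_ae_eq_Icc (μ := fun _ : Fin n => (volume : Measure ℝ))
        (f := (0 : Fin n → ℝ)) (g := 1)
      simpa [Q, volume_pi] using this.symm
    rw [h0, ← lintegral_indicator (hQm j), ← lintegral_indicator (hQm 0),
      ← lintegral_add_right_eq_self _ (fun i => (j i : ℝ))]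
    congr 1; ext x
    have : (x + fun i => (j i : ℝ)) ∈ Q j ↔ x ∈ Q 0 := by simp [hmem]
    by_cases hx : x ∈ Q 0
    · rw [Set.indicator_of_mem (this.2 hx), Set.indicator_of_mem hx, hp]
    · rw [Set.indicator_of_notMem (fun h => hx (this.1 h)), Set.indicator_of_notMem hx]
  have hd : (S : Set (Fin n → ℤ)).PairwiseDisjoint Q := by
    intro j _ k _ hjk
    refine Set.disjoint_left.2 fun x h1 h2 => hjk ?_
    rw [hmem] at h1 h2
    ext i; rw [← h1 i, h2 i]
  have hcard : S.card = (2 * N) ^ n := by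
    have : ((N : ℤ) - -(N : ℤ)).toNat = 2 * N := by omega
    simp only [S, Fintype.card_piFinset, Int.card_Ico, this, Finset.prod_const, Finset.card_univ,
      Fintype.card_fin]
  rw [hcube, lintegral_biUnion_finset hd fun j _ => hQm j]
  simp only [hQ, Finset.sum_const, hcard, nsmul_eq_mul]
  push_cast; rfl

/-! ### The operator on modulated cutoffs -/

/-- The Fourier transform of a dilated cutoff times a trigonometric polynomial is a sum of
rescaled copies of `g` concentrated at the frequencies. -/
lemma fourier_test {n : ℕ} {φ g : (Fin n → ℝ) → ℂ} (hφ : Continuous φ) (hφc : HasCompactSupport φ)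
    (hg : ∀ ξ, g ξ = ∫ y, ch y (-ξ) * φ y) (F : Finset (Fin n → ℤ)) (c : (Fin n → ℤ) → ℂ)
    {R : ℝ} (hR : 0 < R) (ξ : Fin n → ℝ) :
    ∫ y, ch y (-ξ) * (φ (R⁻¹ • y) * ∑ k ∈ F, c k * ch y (fun i => (k i : ℝ))) =
      ∑ k ∈ F, c k * ((R : ℂ) ^ n * g (R • (ξ - fun i => (k i : ℝ)))) := by
  have hφR : HasCompactSupport fun y : Fin n → ℝ => φ (R⁻¹ • y) :=
    hφc.comp_smul (inv_ne_zero hR.ne')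
  have hone : ∀ ζ : Fin n → ℝ, ∫ y, ch y (-ζ) * φ (R⁻¹ • y) = (R : ℂ) ^ n * g (R • ζ) := by
    intro ζ
    have h := Measure.integral_comp_inv_smul (volume : Measure (Fin n → ℝ))
      (fun u => ch u (-(R • ζ)) * φ u) R
    rw [← hg, Module.finrank_fin_fun, abs_of_pos (pow_pos hR n)] at h
    rw [Complex.real_smul] at h
    push_cast at h
    rw [← h]
    congr 1; ext y
    rw [ch_smul, ← smul_neg, smul_smul, inv_mul_cancel₀ hR.ne', one_smul]
  have hint : ∀ ζ : Fin n → ℝ, Integrable fun y => ch y (-ζ) * φ (R⁻¹ • y) := by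
    intro ζ
    refine Continuous.integrable_of_hasCompactSupport ?_ hφR.mul_left
    exact (contDiff_ch (-ζ)).continuous.mul (hφ.comp (continuous_const_smul _))
  calc _ = ∫ y, ∑ k ∈ F, c k * (ch y (-(ξ - fun i => (k i : ℝ))) * φ (R⁻¹ • y)) := by
        congr 1; ext y
        rw [Finset.mul_sum, Finset.mul_sum]
        refine Finset.sum_congr rfl fun k _ => ?_
        rw [neg_sub, sub_eq_add_neg, ch_add_right]; ring
    _ = _ := by
        rw [integral_finsetSum _ fun k _ => (hint _).const_mul _]
        simp only [integral_const_mul, hone]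

lemma integral_rescale {n : ℕ} (H g : (Fin n → ℝ) → ℂ) {R : ℝ} (hR : 0 < R) (k : Fin n → ℝ) :
    ∫ ξ, H ξ * ((R : ℂ) ^ n * g (R • (ξ - k))) = ∫ η, H (k + R⁻¹ • η) * g η := by
  have h := Measure.integral_comp_smul (volume : Measure (Fin n → ℝ))
    (fun η => H (k + R⁻¹ • η) * g η) R
  have h2 := integral_sub_right_eq_self (μ := (volume : Measure (Fin n → ℝ)))
    (fun ξ => H (k + ξ) * g (R • ξ)) k
  simp only [smul_smul, inv_mul_cancel₀ hR.ne', one_smul] at h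
  simp only [add_sub_cancel] at h2
  rw [h, Module.finrank_fin_fun, abs_of_pos (inv_pos.2 (pow_pos hR n)), Complex.real_smul] at h2
  have hRn : (R : ℂ) ^ n ≠ 0 := pow_ne_zero _ (by exact_mod_cast hR.ne')
  calc _ = (R : ℂ) ^ n * ∫ ξ, H ξ * g (R • (ξ - k)) := by
        rw [← integral_const_mul]; congr 1; ext ξ; ring
    _ = _ := by
        rw [h2]; push_cast; field_simp

/-- The operator applied to the test function, after rescaling around each frequency. -/
lemma pdo_test {n : ℕ} {φ g : (Fin n → ℝ) → ℂ} (hφ : Continuous φ) (hφc : HasCompactSupport φ)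
    (hg : ∀ ξ, g ξ = ∫ y, ch y (-ξ) * φ y) (hgi : Integrable g)
    {a : (Fin n → ℝ) × (Fin n → ℝ) → ℂ} (ha : Continuous a) {B : ℝ} (hB : ∀ p, ‖a p‖ ≤ B)
    (F : Finset (Fin n → ℤ)) (c : (Fin n → ℤ) → ℂ)
    {R : ℝ} (hR : 0 < R) (x : Fin n → ℝ) :
    pdo n a (fun y => φ (R⁻¹ • y) * ∑ k ∈ F, c k * ch y (fun i => (k i : ℝ))) x =
      ∑ k ∈ F, c k * ∫ η, ch x ((fun i => (k i : ℝ)) + R⁻¹ • η) *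
        a (x, (fun i => (k i : ℝ)) + R⁻¹ • η) * g η := by
  have h1 : pdo n a (fun y => φ (R⁻¹ • y) * ∑ k ∈ F, c k * ch y (fun i => (k i : ℝ))) x =
      ∫ ξ, ch x ξ * a (x, ξ) *
        ∑ k ∈ F, c k * ((R : ℂ) ^ n * g (R • (ξ - fun i => (k i : ℝ)))) := by
    simp only [← fourier_test hφ hφc hg F c hR, ch_neg]
    rfl
  rw [h1]
  have hint : ∀ k : Fin n → ℝ,
      Integrable fun ξ => ch x ξ * a (x, ξ) * ((R : ℂ) ^ n * g (R • (ξ - k))) := by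
    intro k
    refine Integrable.bdd_mul (c := B) ?_ ?_ ?_
    · exact ((hgi.comp_smul hR.ne').comp_sub_right k).const_mul _
    · exact ((continuous_ch_right x).mul
        (ha.comp (Continuous.prodMk_right x))).aestronglyMeasurable
    · refine Filter.Eventually.of_forall fun ξ => ?_
      rw [norm_mul, norm_ch, one_mul]; exact hB _
  calc _ = ∫ ξ, ∑ k ∈ F, c k * (ch x ξ * a (x, ξ) *
        ((R : ℂ) ^ n * g (R • (ξ - fun i => (k i : ℝ))))) := by
        congr 1; ext ξ
        rw [Finset.mul_sum]
        refine Finset.sum_congr rfl fun k _ => ?_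
        ring
    _ = _ := by
        rw [integral_finsetSum _ fun k _ => (hint _).const_mul _]
        refine Finset.sum_congr rfl fun k _ => ?_
        rw [integral_const_mul, integral_rescale (fun ξ => ch x ξ * a (x, ξ)) g hR]

/-! ### Freezing the symbol -/

/-- By periodicity and compactness of the cube, `a (x, ·)` is equicontinuous at each frequency,
uniformly in `x`. -/
lemma symbol_equicontinuous {n : ℕ} {a : (Fin n → ℝ) × (Fin n → ℝ) → ℂ} (ha : Continuous a)
    (haper : ∀ (x ξ : Fin n → ℝ) (j : Fin n → ℤ), a (x + (fun i => (j i : ℝ)), ξ) = a (x, ξ))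
    (k : Fin n → ℝ) {δ : ℝ} (hδ : 0 < δ) :
    ∃ r > 0, ∀ x h : Fin n → ℝ, ‖h‖ < r → ‖a (x, k + h) - a (x, k)‖ ≤ δ := by
  have hK : IsCompact (Set.Icc (0 : Fin n → ℝ) 1 ×ˢ Metric.closedBall k 1) :=
    isCompact_Icc.prod (isCompact_closedBall k 1)
  have hu := Metric.uniformContinuousOn_iff_le.1
    (hK.uniformContinuousOn_of_continuous ha.continuousOn) δ hδ
  obtain ⟨r, hr, hu⟩ := hu
  refine ⟨min r 1, lt_min hr one_pos, fun x h hh => ?_⟩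
  have hx : x = (fun i => Int.fract (x i)) + (fun i => ((⌊x i⌋ : ℤ) : ℝ)) := by
    ext i; simp [Int.fract_add_floor]
  have hmem : (fun i => Int.fract (x i)) ∈ Set.Icc (0 : Fin n → ℝ) 1 :=
    ⟨fun i => Int.fract_nonneg _, fun i => (Int.fract_lt_one _).le⟩
  rw [hx, haper, haper, ← dist_eq_norm]
  refine hu _ ⟨hmem, ?_⟩ _ ⟨hmem, by simp⟩ ?_
  · simpa using (hh.trans_le (min_le_right _ _)).le
  · rw [Prod.dist_eq]; simpa [hr.le] using (hh.trans_le (min_le_left _ _)).le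

/-- The error in freezing the symbol at a frequency vanishes uniformly in `x`. The increment of
`a` is at most `δ + (2B/r)‖h‖` for small and large `h` alike, so one integration against `g`
suffices. -/
lemma freeze_error {n : ℕ} {g : (Fin n → ℝ) → ℂ} (hgi : Integrable g)
    (hgm : Integrable (fun η => ‖η‖ * ‖g η‖))
    {a : (Fin n → ℝ) × (Fin n → ℝ) → ℂ} (ha : Continuous a) {B : ℝ} (hB : ∀ p, ‖a p‖ ≤ B)
    (haper : ∀ (x ξ : Fin n → ℝ) (j : Fin n → ℤ), a (x + (fun i => (j i : ℝ)), ξ) = a (x, ξ))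
    (k : Fin n → ℝ) {δ : ℝ} (hδ : 0 < δ) :
    ∀ᶠ N : ℕ in Filter.atTop, ∀ x : Fin n → ℝ,
      ‖(∫ η, ch x (k + (N : ℝ)⁻¹ • η) * a (x, k + (N : ℝ)⁻¹ • η) * g η) -
        ch x k * a (x, k) * ∫ η, ch x ((N : ℝ)⁻¹ • η) * g η‖ ≤ δ := by
  have hB0 : 0 ≤ B := (norm_nonneg _).trans (hB 0)
  set G := ∫ η, ‖g η‖ with hG
  set M := ∫ η, ‖η‖ * ‖g η‖ with hM
  have hG0 : 0 ≤ G := integral_nonneg fun _ => norm_nonneg _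
  obtain ⟨r, hr, hu⟩ := symbol_equicontinuous ha haper k (δ := δ / (2 * (G + 1))) (by positivity)
  have hlim : Filter.Tendsto (fun N : ℕ => 2 * B / r * M * (N : ℝ)⁻¹) Filter.atTop (nhds 0) := by
    simpa using (tendsto_inv_atTop_nhds_zero_nat (𝕜 := ℝ)).const_mul (2 * B / r * M)
  filter_upwards [hlim.eventually (gt_mem_nhds (half_pos hδ))] with N hN x
  have hinc : ∀ h : Fin n → ℝ,
      ‖a (x, k + h) - a (x, k)‖ ≤ δ / (2 * (G + 1)) + 2 * B / r * ‖h‖ := by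
    intro h
    rcases lt_or_ge ‖h‖ r with h1 | h1
    · have := hu x h h1
      have : 0 ≤ 2 * B / r * ‖h‖ := by positivity
      linarith
    · have h2 : ‖a (x, k + h) - a (x, k)‖ ≤ 2 * B := by
        refine (norm_sub_le _ _).trans ?_
        linarith [hB (x, k + h), hB (x, k)]
      have h3 : 2 * B ≤ 2 * B / r * ‖h‖ := by
        rw [div_mul_eq_mul_div, le_div_iff₀ hr]; gcongr
      have : 0 ≤ δ / (2 * (G + 1)) := by positivity
      linarith
  have hcont : Continuous fun η : Fin n → ℝ => k + (N : ℝ)⁻¹ • η := by fun_prop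
  have hi1 : Integrable fun η =>
      ch x (k + (N : ℝ)⁻¹ • η) * a (x, k + (N : ℝ)⁻¹ • η) * g η := by
    refine Integrable.bdd_mul (c := B) hgi ?_ ?_
    · exact (((continuous_ch_right x).comp hcont).mul
        (ha.comp ((Continuous.prodMk_right x).comp hcont))).aestronglyMeasurable
    · refine Filter.Eventually.of_forall fun ξ => ?_
      rw [norm_mul, norm_ch, one_mul]; exact hB _
  have hi2 : Integrable fun η => ch x ((N : ℝ)⁻¹ • η) * g η := by
    refine Integrable.bdd_mul (c := 1) hgi ?_ ?_
    · exact ((continuous_ch_right x).comp (continuous_const_smul _)).aestronglyMeasurable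
    · exact Filter.Eventually.of_forall fun ξ => (norm_ch _ _).le
  rw [← integral_const_mul, ← integral_sub hi1 (hi2.const_mul _)]
  have hbi : Integrable fun η => δ / (2 * (G + 1)) * ‖g η‖ +
      2 * B / r * (N : ℝ)⁻¹ * (‖η‖ * ‖g η‖) :=
    (hgi.norm.const_mul _).add (hgm.const_mul _)
  refine (norm_integral_le_of_norm_le hbi (Filter.Eventually.of_forall fun η => ?_)).trans ?_
  · have e : ch x (k + (N : ℝ)⁻¹ • η) * a (x, k + (N : ℝ)⁻¹ • η) * g η -
        ch x k * a (x, k) * (ch x ((N : ℝ)⁻¹ • η) * g η) =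
        ch x (k + (N : ℝ)⁻¹ • η) * (a (x, k + (N : ℝ)⁻¹ • η) - a (x, k)) * g η := by
      rw [ch_add_right]; ring
    rw [e, norm_mul, norm_mul, norm_ch, one_mul]
    refine (mul_le_mul_of_nonneg_right (hinc _) (norm_nonneg _)).trans (le_of_eq ?_)
    rw [norm_smul, norm_inv, Real.norm_natCast]; ring
  · rw [integral_add (hgi.norm.const_mul _) (hgm.const_mul _), integral_const_mul,
      integral_const_mul, ← hG, ← hM]
    have h1 : δ / (2 * (G + 1)) * G ≤ δ / 2 := by
      rw [div_mul_eq_mul_div, div_le_div_iff₀ (by positivity) two_pos]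
      nlinarith
    have h2 : 2 * B / r * (N : ℝ)⁻¹ * M = 2 * B / r * M * (N : ℝ)⁻¹ := by ring
    linarith

lemma eLpNorm_two_sq {n : ℕ} (f : (Fin n → ℝ) → ℂ) (μ : Measure (Fin n → ℝ)) :
    eLpNorm f 2 μ ^ 2 = ∫⁻ x, ‖f x‖ₑ ^ 2 ∂μ := by
  have := eLpNorm_nnreal_pow_eq_lintegral (μ := μ) (f := f) (p := 2) two_ne_zero
  simpa using this

lemma add_sq_le_enn (u v : ENNReal) : (u + v) ^ 2 ≤ 2 * u ^ 2 + 2 * v ^ 2 := by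
  have h := ENNReal.rpow_add_le_mul_rpow_add_rpow u v (p := 2) one_le_two
  norm_num at h
  rwa [mul_add] at h

/-! ### The `L²` estimate -/

/-- The `L²` comparison over the unit cube, up to an arbitrarily small error. -/
lemma key_estimate {n : ℕ} {a : (Fin n → ℝ) × (Fin n → ℝ) → ℂ} (ha : Continuous a)
    {B : ℝ} (hB : ∀ p, ‖a p‖ ≤ B)
    (haper : ∀ (x ξ : Fin n → ℝ) (j : Fin n → ℤ), a (x + (fun i => (j i : ℝ)), ξ) = a (x, ξ))
    {C : ℝ}
    (hT : ∀ f : SchwartzMap (Fin n → ℝ) ℂ,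
      eLpNorm (pdo n a f) 2 volume ≤ ENNReal.ofReal C * eLpNorm f 2 volume)
    (F : Finset (Fin n → ℤ)) (c : (Fin n → ℤ) → ℂ) {δ : NNReal} (hδ : 0 < δ) :
    ∫⁻ x in Set.Icc (0 : Fin n → ℝ) 1,
        ‖∑ k ∈ F, ch x (fun i => (k i : ℝ)) * a (x, fun i => (k i : ℝ)) * c k‖ₑ ^ 2 ≤
      2 * 2 ^ n * ENNReal.ofReal C ^ 2 * (∫⁻ x in Set.Icc (0 : Fin n → ℝ) 1,
        ‖∑ k ∈ F, c k * ch x (fun i => (k i : ℝ))‖ₑ ^ 2) + 2 * (δ : ENNReal) ^ 2 := by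
  obtain ⟨φ, g, hφs, hφc, hφ1, hφ0, hφle, hgi, hgm, hg, hinv⟩ := exists_cutoff n
  set E : (Fin n → ℝ) → ℂ := fun x =>
    ∑ k ∈ F, ch x (fun i => (k i : ℝ)) * a (x, fun i => (k i : ℝ)) * c k with hE
  set P : (Fin n → ℝ) → ℂ := fun x => ∑ k ∈ F, c k * ch x (fun i => (k i : ℝ)) with hP
  have hEper : ∀ (x : Fin n → ℝ) (j : Fin n → ℤ), E (x + fun i => (j i : ℝ)) = E x := by
    intro x j; simp only [hE, ch_periodic, haper]
  have hPper : ∀ (x : Fin n → ℝ) (j : Fin n → ℤ), P (x + fun i => (j i : ℝ)) = P x := by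
    intro x j; simp only [hP, ch_periodic]
  set S := ∑ k ∈ F, ‖c k‖ with hS
  have hS0 : 0 ≤ S := Finset.sum_nonneg fun _ _ => norm_nonneg _
  have hδ' : (0 : ℝ) < δ / (S + 1) := by have : (0 : ℝ) < δ := hδ; positivity
  have hev := (Filter.eventually_all_finset F).2 fun k _ =>
    freeze_error hgi hgm ha hB haper (fun i => (k i : ℝ)) hδ'
  obtain ⟨N, hN, hN1⟩ := (hev.and (Filter.eventually_ge_atTop 1)).exists
  have hNpos : (0 : ℝ) < N := by exact_mod_cast hN1
  let fN : (Fin n → ℝ) → ℂ := fun y => φ ((N : ℝ)⁻¹ • y) * P y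
  have hPs : ContDiff ℝ (⊤ : ℕ∞) P :=
    ContDiff.sum fun k _ => contDiff_const.mul (contDiff_ch _)
  have hfs : ContDiff ℝ (⊤ : ℕ∞) fN := (hφs.comp (contDiff_const_smul _)).mul hPs
  have hfc : HasCompactSupport fN :=
    (hφc.comp_smul (inv_ne_zero hNpos.ne')).mul_right
  have hTf : eLpNorm (pdo n a fN) 2 volume ≤ ENNReal.ofReal C * eLpNorm fN 2 volume :=
    hT (hfc.toSchwartzMap hfs)
  -- On `[-N, N)ⁿ` the cutoff is `1`, and `E` differs from the operator by at most `δ`.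
  have hpt : ∀ x ∈ cube n N, ‖E x‖ₑ ≤ ‖pdo n a fN x‖ₑ + δ := by
    intro x hx
    have hxN : ‖x‖ ≤ N := by
      refine (pi_norm_le_iff_of_nonneg hNpos.le).2 fun i => ?_
      have := hx i (Set.mem_univ i)
      exact abs_le.2 ⟨this.1, this.2.le⟩
    have hone : ∫ η, ch x ((N : ℝ)⁻¹ • η) * g η = 1 := by
      simp only [← ch_smul]
      rw [← hinv]
      apply hφ1
      rw [norm_smul, norm_inv, Real.norm_natCast, inv_mul_le_iff₀ hNpos, mul_one]
      exact hxN
    have hd : ‖pdo n a fN x - E x‖ ≤ δ := by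
      have h1 := pdo_test hφs.continuous hφc hg hgi ha hB F c hNpos x
      have h2 : pdo n a fN x - E x = ∑ k ∈ F, c k *
          ((∫ η, ch x ((fun i => (k i : ℝ)) + (N : ℝ)⁻¹ • η) *
            a (x, (fun i => (k i : ℝ)) + (N : ℝ)⁻¹ • η) * g η) -
          ch x (fun i => (k i : ℝ)) * a (x, fun i => (k i : ℝ)) *
            ∫ η, ch x ((N : ℝ)⁻¹ • η) * g η) := by
        rw [h1, hone, ← Finset.sum_sub_distrib]
        refine Finset.sum_congr rfl fun k _ => ?_
        ring
      rw [h2]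
      calc _ ≤ ∑ k ∈ F, ‖c k‖ * (δ / (S + 1)) := by
            refine (norm_sum_le _ _).trans (Finset.sum_le_sum fun k hk => ?_)
            rw [norm_mul]
            exact mul_le_mul_of_nonneg_left (hN k hk x) (norm_nonneg _)
        _ = S * (δ / (S + 1)) := by rw [← Finset.sum_mul]
        _ ≤ δ := by
            rw [mul_div_assoc', div_le_iff₀ (by positivity)]
            nlinarith [δ.coe_nonneg]
    have hde : ‖E x - pdo n a fN x‖ₑ ≤ δ := by
      rw [enorm_le_coe]
      rw [norm_sub_rev] at hd
      exact_mod_cast hd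
    calc ‖E x‖ₑ = ‖pdo n a fN x + (E x - pdo n a fN x)‖ₑ := by rw [add_sub_cancel]
      _ ≤ _ := (enorm_add_le _ _).trans (by gcongr)
  -- The test function is dominated by `P` on `[-2N, 2N)ⁿ` and vanishes elsewhere.
  have hup : ∫⁻ x, ‖fN x‖ₑ ^ 2 ≤ ∫⁻ x in cube n (2 * N), ‖P x‖ₑ ^ 2 := by
    rw [← lintegral_indicator (measurableSet_cube n _)]
    refine lintegral_mono fun x => ?_
    by_cases hx : x ∈ cube n (2 * N)
    · rw [Set.indicator_of_mem hx]
      simp only [fN, enorm_mul]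
      have : ‖φ ((N : ℝ)⁻¹ • x)‖ₑ ≤ 1 := by
        have := hφle ((N : ℝ)⁻¹ • x)
        rw [← ENNReal.coe_one, enorm_le_coe]
        exact_mod_cast this
      gcongr
      exact mul_le_of_le_one_left zero_le this
    · have h0 : φ ((N : ℝ)⁻¹ • x) = 0 := by
        apply hφ0
        by_contra! hlt
        apply hx
        rw [norm_smul, norm_inv, Real.norm_natCast, inv_mul_lt_iff₀ hNpos] at hlt
        intro i _
        have := abs_lt.1 ((norm_le_pi_norm x i).trans_lt hlt)
        push_cast
        constructor <;> linarith [this.1, this.2]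
      simp [fN, h0]
  have hTsq : ∫⁻ x, ‖pdo n a fN x‖ₑ ^ 2 ≤ ENNReal.ofReal C ^ 2 * ∫⁻ x, ‖fN x‖ₑ ^ 2 := by
    rw [← eLpNorm_two_sq, ← eLpNorm_two_sq, ← mul_pow]
    gcongr
  have hconst : ∫⁻ _ in cube n N, 2 * (δ : ENNReal) ^ 2 =
      (2 * N : ℕ) ^ n * (2 * (δ : ENNReal) ^ 2) := by
    rw [lintegral_cube N _ fun _ _ => rfl, lintegral_const, Measure.restrict_apply_univ,
      Real.volume_Icc_pi]
    simp
  have hmain : ((2 * N : ℕ) : ENNReal) ^ n * ∫⁻ x in Set.Icc (0 : Fin n → ℝ) 1, ‖E x‖ₑ ^ 2 ≤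
      ((2 * N : ℕ) : ENNReal) ^ n * (2 * 2 ^ n * ENNReal.ofReal C ^ 2 *
        (∫⁻ x in Set.Icc (0 : Fin n → ℝ) 1, ‖P x‖ₑ ^ 2) + 2 * (δ : ENNReal) ^ 2) := by
    rw [← lintegral_cube N (fun x => ‖E x‖ₑ ^ 2) fun x j => by simp only [hEper]]
    calc ∫⁻ x in cube n N, ‖E x‖ₑ ^ 2
        ≤ ∫⁻ x in cube n N, (2 * ‖pdo n a fN x‖ₑ ^ 2 + 2 * (δ : ENNReal) ^ 2) := by
          refine setLIntegral_mono' (measurableSet_cube n N) fun x hx => ?_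
          exact (pow_le_pow_left₀ zero_le (hpt x hx) 2).trans (add_sq_le_enn _ _)
      _ = 2 * (∫⁻ x in cube n N, ‖pdo n a fN x‖ₑ ^ 2) +
          ((2 * N : ℕ) : ENNReal) ^ n * (2 * (δ : ENNReal) ^ 2) := by
          rw [lintegral_add_right _ measurable_const, hconst,
            lintegral_const_mul' _ _ ENNReal.ofNat_ne_top]
      _ ≤ 2 * (ENNReal.ofReal C ^ 2 * ∫⁻ x in cube n (2 * N), ‖P x‖ₑ ^ 2) +
          ((2 * N : ℕ) : ENNReal) ^ n * (2 * (δ : ENNReal) ^ 2) := by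
          gcongr
          exact (setLIntegral_le_lintegral _ _).trans (hTsq.trans (by gcongr))
      _ = _ := by
          rw [lintegral_cube (2 * N) (fun x => ‖P x‖ₑ ^ 2) fun x j => by simp only [hPper]]
          have h4 : ((2 * (2 * N) : ℕ) : ENNReal) ^ n = 2 ^ n * ((2 * N : ℕ) : ENNReal) ^ n := by
            rw [← mul_pow]; push_cast; rfl
          rw [h4]
          ring
  refine (ENNReal.mul_le_mul_iff_right ?_ ?_).1 hmain
  · have : N ≠ 0 := by omega
    exact pow_ne_zero _ (by exact_mod_cast (by omega : 2 * N ≠ 0))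
  · exact ENNReal.pow_ne_top (ENNReal.natCast_ne_top _)

/-- If `a : ℝⁿ × ℝⁿ → ℂ` is continuous, bounded and `ℤⁿ`-periodic in its first variable, and
the pseudo-differential operator `T` with symbol `a` is bounded on `L²(ℝⁿ)` (on Schwartz
functions), then the periodic operator
`A P (x) = Σ_{ξ ∈ F} e^{2πi x·ξ} a(x,ξ) c_ξ` is bounded on trigonometric polynomials
`P(x) = Σ_{ξ ∈ F} c_ξ e^{2πi x·ξ}` in the `L²([0,1]ⁿ)` norm. -/
theorem periodic_boundedness_of_euclidean_boundedness (n : ℕ) (hn : 1 ≤ n)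
    (a : (Fin n → ℝ) × (Fin n → ℝ) → ℂ) (ha : Continuous a)
    (habdd : ∃ B : ℝ, ∀ p, ‖a p‖ ≤ B)
    (haper : ∀ (x ξ : Fin n → ℝ) (j : Fin n → ℤ), a (x + (fun i => (j i : ℝ)), ξ) = a (x, ξ))
    (C : ℝ) (hC : 0 ≤ C)
    (hT : ∀ f : SchwartzMap (Fin n → ℝ) ℂ,
      eLpNorm (pdo n a f) 2 volume ≤ ENNReal.ofReal C * eLpNorm f 2 volume) :
    ∃ C' : ℝ, 0 ≤ C' ∧ ∀ (F : Finset (Fin n → ℤ)) (c : (Fin n → ℤ) → ℂ),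
      eLpNorm
        (fun x : Fin n → ℝ => ∑ ξ ∈ F,
          Complex.exp (2 * π * Complex.I * (∑ i, x i * (ξ i : ℝ))) *
            a (x, fun i => (ξ i : ℝ)) * c ξ)
        2 (volume.restrict (Set.Icc (0 : Fin n → ℝ) 1)) ≤
      ENNReal.ofReal C' *
        eLpNorm
          (fun x : Fin n → ℝ => ∑ ξ ∈ F,
            c ξ * Complex.exp (2 * π * Complex.I * (∑ i, x i * (ξ i : ℝ))))
          2 (volume.restrict (Set.Icc (0 : Fin n → ℝ) 1)) := by
  obtain ⟨B, hB⟩ := habdd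
  refine ⟨√(2 * 2 ^ n) * C, by positivity, fun F c => ?_⟩
  rw [← ENNReal.pow_le_pow_left_iff two_ne_zero, mul_pow, eLpNorm_two_sq, eLpNorm_two_sq,
    ENNReal.ofReal_mul (by positivity), mul_pow, ← ENNReal.ofReal_pow (by positivity),
    Real.sq_sqrt (by positivity), ENNReal.ofReal_mul (by positivity),
    ENNReal.ofReal_pow (by positivity), ENNReal.ofReal_ofNat]
  refine ENNReal.le_of_forall_pos_le_add fun ε hε _ => ?_
  have h := key_estimate ha hB haper hT F c (δ := NNReal.sqrt (ε / 2))
    (NNReal.sqrt_pos.2 (half_pos hε))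
  have hε2 : 2 * ((NNReal.sqrt (ε / 2) : NNReal) : ENNReal) ^ 2 = ε := by
    rw [← ENNReal.coe_pow, NNReal.sq_sqrt]
    exact_mod_cast mul_div_cancel₀ ε two_ne_zero
  rw [hε2] at h
  exact h
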